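/- The inclusion of infinitary conversion in infinitary equational reasoning is strict: in the signature with constants a, b and unary symbols f, C, let →ε = { (a, f(a)), (b, f(b)), (C(b), C(C(a))) }, and let f^ω and C^ω denote the unique terms satisfying f^ω = f(f^ω) and C^ω = C(C^ω) (which exist by corecursion). Then a =^∞ b, C(a) =^∞ C^ω, and C(a) is NOT related to C^ω by ((→→→)⁻¹ ∘ →→→)*; hence ((→→→)⁻¹ ∘ →→→)* ⊊ =^∞. -/

import Mathlib

open Relation

/-- The polynomial functor of a signature. -/
def Sig {F : Type} (ar : F → ℕ) (X : Type) : PFunctor.{0} :=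
  ⟨X ⊕ F, fun a => match a with
    | Sum.inl _ => Empty
    | Sum.inr f => Fin (ar f)⟩

/-- Possibly infinite terms: the final coalgebra (M-type) of the signature functor. -/
abbrev Tm {F : Type} (ar : F → ℕ) (X : Type) : Type := (Sig ar X).M

/-- The lifting `↓R` of a relation on terms. -/
def lift {F : Type} (ar : F → ℕ) (X : Type) (R : Tm ar X → Tm ar X → Prop) :
    Tm ar X → Tm ar X → Prop := fun s t =>
  s = t ∨ ∃ (f : F) (sa ta : Fin (ar f) → Tm ar X),
    s = PFunctor.M.mk ⟨Sum.inr f, sa⟩ ∧ t = PFunctor.M.mk ⟨Sum.inr f, ta⟩ ∧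
    ∀ i, R (sa i) (ta i)

/-- Knaster–Tarski least fixed point. -/
def mu {L : Type*} [CompleteLattice L] (f : L → L) : L := sInf {x | f x ≤ x}

/-- Knaster–Tarski greatest fixed point. -/
def nu {L : Type*} [CompleteLattice L] (f : L → L) : L := sSup {x | x ≤ f x}

/-- The infinitary rewrite relation `→→→ := μx.νy.((→ε ∪ ↓x)* ∘ ↓y)`. -/
def ired {F X : Type} (ar : F → ℕ) (root : Tm ar X → Tm ar X → Prop) :
    Tm ar X → Tm ar X → Prop :=
  mu (fun x => nu (fun y => Relation.Comp (ReflTransGen (root ⊔ lift ar X x)) (lift ar X y)))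

/-- Infinitary equational reasoning: `=^∞ := νy.((→ε⁻¹ ∪ →ε ∪ ↓y)*)`. -/
def eqInf {F X : Type} (ar : F → ℕ) (root : Tm ar X → Tm ar X → Prop) :
    Tm ar X → Tm ar X → Prop :=
  nu (fun y => ReflTransGen (flip root ⊔ root ⊔ lift ar X y))

/-- The signature with constants `a`, `b` and unary symbols `f`, `C`. -/
inductive F4 : Type
  | a | b | f | C

/-- Arities: `a`, `b` are constants; `f`, `C` are unary. -/
def ar4 : F4 → ℕ
  | F4.a => 0
  | F4.b => 0
  | F4.f => 1
  | F4.C => 1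

variable {X : Type}

/-- The constant `a` as a term. -/
def ta (X : Type) : Tm ar4 X := PFunctor.M.mk ⟨Sum.inr F4.a, Fin.elim0⟩

/-- The constant `b` as a term. -/
def tb (X : Type) : Tm ar4 X := PFunctor.M.mk ⟨Sum.inr F4.b, Fin.elim0⟩

/-- Application of the unary symbol `f`. -/
def fApp (t : Tm ar4 X) : Tm ar4 X := PFunctor.M.mk ⟨Sum.inr F4.f, fun _ => t⟩

/-- Application of the unary symbol `C`. -/
def CApp (t : Tm ar4 X) : Tm ar4 X := PFunctor.M.mk ⟨Sum.inr F4.C, fun _ => t⟩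

/-- The root-step relation `→ε = { (a, f(a)), (b, f(b)), (C(b), C(C(a))) }`. -/
def root4 (X : Type) : Tm ar4 X → Tm ar4 X → Prop := fun s t =>
  (s = ta X ∧ t = fApp (ta X)) ∨ (s = tb X ∧ t = fApp (tb X)) ∨
  (s = CApp (tb X) ∧ t = CApp (CApp (ta X)))

/-- The term `f^ω`, obtained by corecursion. -/
def fomega (X : Type) : Tm ar4 X :=
  PFunctor.M.corec (fun _ : Unit => ⟨Sum.inr F4.f, fun _ => ()⟩) ()

/-- The term `C^ω`, obtained by corecursion. -/
def Comega (X : Type) : Tm ar4 X :=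
  PFunctor.M.corec (fun _ : Unit => ⟨Sum.inr F4.C, fun _ => ()⟩) ()

/-!
Let the weight of a term be its number of leading `C`s, plus one if these are followed by `b`; the
only term of infinite weight is `C^ω`. No root step increases the weight (both sides of
`C(b) → C(C(a))` weigh `2`), and this survives `→→→`, so only `C^ω` reduces to `C^ω`. As no rule
applies inside `C^ω`, it also reduces only to itself, and so it forms a conversion class of its own.

In contrast, `a =^∞ b` holds since `a → f(a) =^∞ f(b) ← b` can be iterated coinductively. This may
be used under a `C`, and iterating `C(a) =^∞ C(b) → C(C(a))` below the outermost `C` yields `C^ω`.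
-/

theorem eq_of_hereditary_shape {P : PFunctor} {a : P.A} {S : Set P.M}
    (hS : ∀ t ∈ S, ∃ k : P.B a → P.M, t = PFunctor.M.mk ⟨a, k⟩ ∧ ∀ i, k i ∈ S)
    {s t : P.M} (hs : s ∈ S) (ht : t ∈ S) : s = t := by
  refine PFunctor.M.bisim (fun s t => s ∈ S ∧ t ∈ S) ?_ s t ⟨hs, ht⟩
  rintro s t ⟨hs, ht⟩
  obtain ⟨k, rfl, hk⟩ := hS s hs
  obtain ⟨l, rfl, hl⟩ := hS t ht
  exact ⟨a, k, l, rfl, rfl, fun i => ⟨hk i, hl i⟩⟩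

section Signature

variable {F : Type} {ar : F → ℕ} {R S : Tm ar X → Tm ar X → Prop} {s t : Tm ar X}

theorem lift_mono (h : R ≤ S) : lift ar X R ≤ lift ar X S := by
  rintro s t (rfl | ⟨g, ss, ts, rfl, rfl, hR⟩)
  · exact Or.inl rfl
  · exact Or.inr ⟨g, ss, ts, rfl, rfl, fun i => h _ _ (hR i)⟩

theorem lift_flip : lift ar X (flip R) s t ↔ lift ar X R t s := by
  constructor <;>
  · rintro (rfl | ⟨g, ss, ts, rfl, rfl, hR⟩)
    · exact Or.inl rfl
    · exact Or.inr ⟨g, ts, ss, rfl, rfl, hR⟩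

theorem mk_inr_inj {g : F} {ss ts : Fin (ar g) → Tm ar X}
    (h : (PFunctor.M.mk ⟨Sum.inr g, ss⟩ : Tm ar X) = PFunctor.M.mk ⟨Sum.inr g, ts⟩) : ss = ts :=
  eq_of_heq (Sigma.mk.inj (PFunctor.M.mk_inj h)).2

theorem head_eq_of_mk_inr_eq {g h : F} {ss : Fin (ar g) → Tm ar X} {ts : Fin (ar h) → Tm ar X}
    (e : (PFunctor.M.mk ⟨Sum.inr g, ss⟩ : Tm ar X) = PFunctor.M.mk ⟨Sum.inr h, ts⟩) : g = h :=
  Sum.inr_injective (congrArg Sigma.fst (PFunctor.M.mk_inj e))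

theorem exists_args_of_lift_mk_right (hR : ∀ u, R u u) {g : F} {ts : Fin (ar g) → Tm ar X}
    (h : lift ar X R s (PFunctor.M.mk ⟨Sum.inr g, ts⟩)) :
    ∃ ss, s = PFunctor.M.mk ⟨Sum.inr g, ss⟩ ∧ ∀ i, R (ss i) (ts i) := by
  rcases h with rfl | ⟨g', ss, ts', rfl, ht, hss⟩
  · exact ⟨ts, rfl, fun i => hR (ts i)⟩
  · obtain rfl := head_eq_of_mk_inr_eq ht
    obtain rfl := mk_inr_inj ht
    exact ⟨ss, rfl, hss⟩

end Signature

section EquationalReasoning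

variable {F : Type} {ar : F → ℕ} {root R : Tm ar X → Tm ar X → Prop} {s t u : Tm ar X}

/-- The monotone operator `y ↦ (→ε⁻¹ ∪ →ε ∪ ↓y)*` whose greatest fixed point is `=^∞`, bundled so
that the Knaster–Tarski lemmas on `OrderHom.gfp` apply to `eqInf`. -/
def eqStep (ar : F → ℕ) (root : Tm ar X → Tm ar X → Prop) :
    (Tm ar X → Tm ar X → Prop) →o (Tm ar X → Tm ar X → Prop) where
  toFun y := ReflTransGen (flip root ⊔ root ⊔ lift ar X y)
  monotone' _ _ h := ReflTransGen.mono (sup_le_sup_left (lift_mono h) _)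

theorem eqStep_of_root (h : root s t) : eqStep ar root R s t := .single (Or.inl (Or.inr h))

theorem eqStep_of_root_symm (h : root t s) : eqStep ar root R s t := .single (Or.inl (Or.inl h))

theorem eqStep_of_lift (h : lift ar X R s t) : eqStep ar root R s t := .single (Or.inr h)

theorem eqStep_trans (hst : eqStep ar root R s t) (htu : eqStep ar root R t u) :
    eqStep ar root R s u :=
  ReflTransGen.trans hst htu

theorem eqStep_eqInf : eqStep ar root (eqInf ar root) = eqInf ar root :=
  (eqStep ar root).map_gfp

theorem le_eqInf_of_le_eqStep_sup (h : R ≤ eqStep ar root (R ⊔ eqInf ar root)) :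
    R ≤ eqInf ar root := by
  have heqInf : eqInf ar root ≤ eqStep ar root (R ⊔ eqInf ar root) :=
    (eqStep ar root).gfp_le_map le_sup_right
  exact le_sup_left.trans ((eqStep ar root).le_gfp (sup_le h heqInf))

theorem eqStep_flip_of_eqStep (h : eqStep ar root R s t) : eqStep ar root (flip R) t s := by
  refine ReflTransGen.mono ?_ _ _ (reflTransGen_swap.2 h)
  rintro u v ((hroot | hroot) | hlift)
  · exact Or.inl (Or.inr hroot)
  · exact Or.inl (Or.inl hroot)
  · exact Or.inr (lift_flip.2 hlift)

theorem eqInf_symm (h : eqInf ar root s t) : eqInf ar root t s := by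
  refine (eqStep ar root).le_gfp (a := flip (eqInf ar root)) (fun v w hwv => ?_) t s h
  rw [flip, ← eqStep_eqInf] at hwv
  exact eqStep_flip_of_eqStep hwv

theorem eqInf_equivalence : Equivalence (eqInf ar root) where
  refl t := by
    rw [← eqStep_eqInf]
    exact ReflTransGen.refl
  symm := eqInf_symm
  trans hst htu := by
    rw [← eqStep_eqInf] at hst htu ⊢
    exact eqStep_trans hst htu

end EquationalReasoning

section Reduction

variable {F : Type} {ar : F → ℕ} {root R : Tm ar X → Tm ar X → Prop}

theorem ired_le_of_forall
    (h : ∀ y, y ≤ Comp (ReflTransGen (root ⊔ lift ar X R)) (lift ar X y) → y ≤ R) :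
    ired ar root ≤ R :=
  sInf_le (sSup_le (α := Tm ar X → Tm ar X → Prop) h)

theorem ired_le_of_approximants [Std.Refl R] [IsTrans (Tm ar X) R]
    {A : ℕ → Tm ar X → Tm ar X → Prop} (hA : ∀ {s t}, R s t ↔ ∀ n, A n s t)
    (hroot : root ≤ R) (hzero : ∀ s t, A 0 s t)
    (hsucc : ∀ n, Comp R (lift ar X (A n)) ≤ A (n + 1)) : ired ar root ≤ R := by
  have hlift : lift ar X R ≤ R := by
    refine fun s t hst => hA.2 fun n => ?_
    cases n with
    | zero => exact hzero s t
    | succ n => exact hsucc n s t ⟨s, refl s, lift_mono (fun _ _ h => hA.1 h n) s t hst⟩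
  -- `R` absorbs the inductive layer of `→→→`; the coinductive layer `y` is bounded depth by depth.
  have hstar : ReflTransGen (root ⊔ lift ar X R) ≤ R := reflTransGen_le_of_le (sup_le hroot hlift)
  refine ired_le_of_forall fun y hy => ?_
  have hyA (n : ℕ) : y ≤ A n := by
    induction n with
    | zero => exact fun s t _ => hzero s t
    | succ n ih =>
      intro s t hst
      obtain ⟨u, hsu, hut⟩ := hy s t hst
      exact hsucc n s t ⟨u, hstar s u hsu, lift_mono ih u t hut⟩
  exact fun s t hst => hA.2 fun n => hyA n s t hst

theorem ired_le_eqInf : ired ar root ≤ eqInf ar root := by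
  refine ired_le_of_forall fun y hy => le_eqInf_of_le_eqStep_sup fun s t hst => ?_
  obtain ⟨u, hsu, hut⟩ := hy s t hst
  have hsteps : root ⊔ lift ar X (eqInf ar root) ≤
      flip root ⊔ root ⊔ lift ar X (y ⊔ eqInf ar root) :=
    sup_le_sup le_sup_right (lift_mono le_sup_right)
  exact (ReflTransGen.mono hsteps s u hsu).tail (Or.inr (lift_mono le_sup_left u t hut))

/-- Infinitary conversion `((→→→)⁻¹ ∘ →→→)*`, the relation to be compared with `=^∞`; it lies below
every equivalence relation that contains `→→→`. -/
def iconv (ar : F → ℕ) (root : Tm ar X → Tm ar X → Prop) : Tm ar X → Tm ar X → Prop :=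
  ReflTransGen (Comp (flip (ired ar root)) (ired ar root))

theorem iconv_le_of_ired_le (hR : Equivalence R) (h : ired ar root ≤ R) : iconv ar root ≤ R := by
  refine reflTransGen_le_of_equivalence_of_le hR ?_
  rintro s t ⟨u, hus, hut⟩
  exact hR.trans (hR.symm (h u s hus)) (h u t hut)

theorem iconv_le_eqInf : iconv ar root ≤ eqInf ar root :=
  iconv_le_of_ired_le eqInf_equivalence ired_le_eqInf

end Reduction

section Terms

variable {R : Tm ar4 X → Tm ar4 X → Prop} {s t : Tm ar4 X}

theorem CApp_inj (h : CApp s = CApp t) : s = t :=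
  congrFun (mk_inr_inj (g := F4.C) h) (0 : Fin 1)

theorem ta_ne_tb : ta X ≠ tb X := fun h => nomatch head_eq_of_mk_inr_eq h

theorem ta_ne_CApp : ta X ≠ CApp t := fun h => nomatch head_eq_of_mk_inr_eq h

theorem tb_ne_CApp : tb X ≠ CApp t := fun h => nomatch head_eq_of_mk_inr_eq h

theorem fApp_ne_tb : fApp t ≠ tb X := fun h => nomatch head_eq_of_mk_inr_eq h

theorem fApp_ne_CApp : fApp s ≠ CApp t := fun h => nomatch head_eq_of_mk_inr_eq h

theorem mk_C_eq_CApp (ts : Fin (ar4 F4.C) → Tm ar4 X) :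
    PFunctor.M.mk ⟨Sum.inr F4.C, ts⟩ = CApp (ts (0 : Fin 1)) := by
  have hts : ts = fun _ => ts (0 : Fin 1) :=
    funext fun i => congrArg ts (Subsingleton.elim (α := Fin 1) i 0)
  exact congrArg (fun us => PFunctor.M.mk (F := Sig ar4 X) ⟨Sum.inr F4.C, us⟩) hts

theorem lift_CApp (h : R s t) : lift ar4 X R (CApp s) (CApp t) :=
  Or.inr ⟨F4.C, _, _, rfl, rfl, fun _ => h⟩

theorem lift_fApp (h : R s t) : lift ar4 X R (fApp s) (fApp t) :=
  Or.inr ⟨F4.f, _, _, rfl, rfl, fun _ => h⟩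

theorem exists_of_lift_CApp_right (hR : ∀ u, R u u) (h : lift ar4 X R s (CApp t)) :
    ∃ s', s = CApp s' ∧ R s' t := by
  obtain ⟨ss, rfl, hss⟩ := exists_args_of_lift_mk_right (g := F4.C) hR h
  exact ⟨_, mk_C_eq_CApp ss, hss (0 : Fin 1)⟩

theorem exists_of_lift_CApp_left (hR : ∀ u, R u u) (h : lift ar4 X R (CApp s) t) :
    ∃ t', t = CApp t' ∧ R s t' :=
  exists_of_lift_CApp_right (R := flip R) hR (lift_flip.2 h)

theorem eq_tb_of_lift_tb_right (hR : ∀ u, R u u) (h : lift ar4 X R s (tb X)) : s = tb X := by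
  obtain ⟨ss, rfl, -⟩ := exists_args_of_lift_mk_right (g := F4.b) hR h
  rw [tb, Subsingleton.elim (α := Fin 0 → Tm ar4 X) ss Fin.elim0]

theorem fomega_eq_fApp : fomega X = fApp (fomega X) := PFunctor.M.corec_def _ ()

theorem Comega_eq_CApp : Comega X = CApp (Comega X) := PFunctor.M.corec_def _ ()

theorem lift_CApp_Comega (h : R s (Comega X)) : lift ar4 X R (CApp s) (Comega X) := by
  rw [Comega_eq_CApp]
  exact lift_CApp h

theorem exists_of_lift_Comega_left (hR : ∀ u, R u u) (h : lift ar4 X R (Comega X) t) :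
    ∃ t', t = CApp t' ∧ R (Comega X) t' := by
  rw [Comega_eq_CApp] at h
  exact exists_of_lift_CApp_left hR h

theorem eq_fomega_of_eq_fApp (h : t = fApp t) : t = fomega X :=
  eq_of_hereditary_shape (S := {t | t = fApp t}) (fun u hu => ⟨fun _ => u, hu, fun _ => hu⟩)
    h fomega_eq_fApp

theorem eq_Comega_of_eq_CApp (h : t = CApp t) : t = Comega X :=
  eq_of_hereditary_shape (S := {t | t = CApp t}) (fun u hu => ⟨fun _ => u, hu, fun _ => hu⟩)
    h Comega_eq_CApp

end Terms

section Weight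

variable {s t : Tm ar4 X} {n : ℕ}

/-- `WeightAtLeast n t` says that the weight of `t`, its number of leading `C`s plus one if these
are followed by `b`, is at least `n`. The weight can be infinite, so it is only accessed through its
finite lower bounds. -/
def WeightAtLeast : ℕ → Tm ar4 X → Prop
  | 0, _ => True
  | n + 1, t => (t = tb X ∧ n = 0) ∨ ∃ u, t = CApp u ∧ WeightAtLeast n u

theorem weightAtLeast_zero : WeightAtLeast 0 t := trivial

theorem weightAtLeast_succ_CApp : WeightAtLeast (n + 1) (CApp t) ↔ WeightAtLeast n t := by
  constructor
  · rintro (⟨h, -⟩ | ⟨u, h, hu⟩)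
    · exact absurd h.symm tb_ne_CApp
    · rwa [CApp_inj h]
  · exact fun h => Or.inr ⟨t, rfl, h⟩

theorem weightAtLeast_one_tb : WeightAtLeast 1 (tb X) := Or.inl ⟨rfl, rfl⟩

theorem weightAtLeast_ta_iff : WeightAtLeast n (ta X) ↔ n = 0 := by
  refine ⟨fun h => ?_, fun h => h ▸ weightAtLeast_zero⟩
  match n, h with
  | 0, _ => rfl
  | _ + 1, Or.inl ⟨h, _⟩ => exact absurd h ta_ne_tb
  | _ + 1, Or.inr ⟨_, h, _⟩ => exact absurd h ta_ne_CApp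

theorem weightAtLeast_fApp_iff : WeightAtLeast n (fApp t) ↔ n = 0 := by
  refine ⟨fun h => ?_, fun h => h ▸ weightAtLeast_zero⟩
  match n, h with
  | 0, _ => rfl
  | _ + 1, Or.inl ⟨h, _⟩ => exact absurd h fApp_ne_tb
  | _ + 1, Or.inr ⟨_, h, _⟩ => exact absurd h fApp_ne_CApp

theorem weightAtLeast_Comega : ∀ n, WeightAtLeast n (Comega X)
  | 0 => weightAtLeast_zero
  | n + 1 => by
    rw [Comega_eq_CApp, weightAtLeast_succ_CApp]
    exact weightAtLeast_Comega n

theorem exists_eq_CApp_of_forall_weightAtLeast (h : ∀ n, WeightAtLeast n t) :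
    ∃ u, t = CApp u ∧ ∀ n, WeightAtLeast n u := by
  rcases h 2 with ⟨-, h⟩ | ⟨u, rfl, -⟩
  · exact absurd h one_ne_zero
  · exact ⟨u, rfl, fun n => weightAtLeast_succ_CApp.1 (h (n + 1))⟩

theorem forall_weightAtLeast_iff : (∀ n, WeightAtLeast n t) ↔ t = Comega X := by
  refine ⟨fun h => ?_, fun h => h ▸ weightAtLeast_Comega⟩
  refine eq_of_hereditary_shape (a := Sum.inr F4.C) (S := {t | ∀ n, WeightAtLeast n t})
    (fun v hv => ?_) h weightAtLeast_Comega
  obtain ⟨u, rfl, hu⟩ := exists_eq_CApp_of_forall_weightAtLeast hv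
  exact ⟨fun _ => u, rfl, fun _ => hu⟩

theorem weightAtLeast_of_root4 (h : root4 X s t) (ht : WeightAtLeast n t) : WeightAtLeast n s := by
  rcases h with ⟨rfl, rfl⟩ | ⟨rfl, rfl⟩ | ⟨rfl, rfl⟩
  · rw [weightAtLeast_fApp_iff.1 ht]
    exact weightAtLeast_zero
  · rw [weightAtLeast_fApp_iff.1 ht]
    exact weightAtLeast_zero
  · match n with
    | 0 => exact weightAtLeast_zero
    | 1 => exact weightAtLeast_succ_CApp.2 weightAtLeast_zero
    | 2 => exact weightAtLeast_succ_CApp.2 weightAtLeast_one_tb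
    | n + 3 =>
      rw [weightAtLeast_succ_CApp, weightAtLeast_succ_CApp, weightAtLeast_ta_iff] at ht
      exact absurd ht n.succ_ne_zero

theorem weightAtLeast_succ_of_lift {R : Tm ar4 X → Tm ar4 X → Prop} (hR : ∀ u, R u u)
    (hweight : ∀ u v, R u v → WeightAtLeast n v → WeightAtLeast n u)
    (h : lift ar4 X R s t) (ht : WeightAtLeast (n + 1) t) : WeightAtLeast (n + 1) s := by
  rcases ht with ⟨rfl, rfl⟩ | ⟨t', rfl, ht'⟩
  · rw [eq_tb_of_lift_tb_right hR h]
    exact weightAtLeast_one_tb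
  · obtain ⟨s', rfl, hst⟩ := exists_of_lift_CApp_right hR h
    exact weightAtLeast_succ_CApp.2 (hweight s' t' hst ht')

end Weight

section ConversionClass

variable {s t : Tm ar4 X}

theorem weightAtLeast_of_ired (h : ired ar4 (root4 X) s t) (n : ℕ) (ht : WeightAtLeast n t) :
    WeightAtLeast n s := by
  let R : Tm ar4 X → Tm ar4 X → Prop := fun s t => ∀ n, WeightAtLeast n t → WeightAtLeast n s
  have : Std.Refl R := ⟨fun _ _ h => h⟩
  have : IsTrans (Tm ar4 X) R := ⟨fun _ _ _ hst htu n hu => hst n (htu n hu)⟩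
  refine ired_le_of_approximants (R := R) (A := fun n s t => WeightAtLeast n t → WeightAtLeast n s)
    Iff.rfl (fun _ _ hroot n => weightAtLeast_of_root4 hroot) (fun _ _ _ => weightAtLeast_zero)
    ?_ s t h n ht
  rintro n s t ⟨u, hsu, hut⟩ ht
  exact hsu (n + 1) (weightAtLeast_succ_of_lift (fun _ => id) (fun _ _ => id) hut ht)

theorem not_root4_Comega : ¬ root4 X (Comega X) t := by
  rw [Comega_eq_CApp]
  rintro (⟨h, -⟩ | ⟨h, -⟩ | ⟨h, -⟩)
  · exact ta_ne_CApp h.symm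
  · exact tb_ne_CApp h.symm
  · exact tb_ne_CApp ((CApp_inj h).symm.trans Comega_eq_CApp)

theorem eq_Comega_of_ired_Comega (h : ired ar4 (root4 X) (Comega X) t) : t = Comega X := by
  let R : Tm ar4 X → Tm ar4 X → Prop := fun s t => s = Comega X → t = Comega X
  have : Std.Refl R := ⟨fun _ h => h⟩
  have : IsTrans (Tm ar4 X) R := ⟨fun _ _ _ hst htu hs => htu (hst hs)⟩
  refine ired_le_of_approximants (R := R) (A := fun n s t => s = Comega X → WeightAtLeast n t)
    ?_ ?_ (fun _ _ _ => weightAtLeast_zero) ?_ _ t h rfl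
  · intro s t
    rw [forall_comm, forall_weightAtLeast_iff]
  · rintro s t hroot rfl
    exact absurd hroot not_root4_Comega
  · rintro n s t ⟨u, hsu, hut⟩ hs
    rw [hsu hs] at hut
    obtain ⟨t', rfl, ht'⟩ :=
      exists_of_lift_Comega_left (fun u hu => forall_weightAtLeast_iff.2 hu n) hut
    exact weightAtLeast_succ_CApp.2 (ht' rfl)

theorem eq_Comega_iff_of_ired (h : ired ar4 (root4 X) s t) : s = Comega X ↔ t = Comega X := by
  constructor
  · rintro rfl
    exact eq_Comega_of_ired_Comega h
  · rintro rfl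
    exact forall_weightAtLeast_iff.1 fun n => weightAtLeast_of_ired h n (weightAtLeast_Comega n)

theorem eq_Comega_iff_of_iconv (h : iconv ar4 (root4 X) s t) : s = Comega X ↔ t = Comega X := by
  have hequiv : Equivalence fun s t : Tm ar4 X => (s = Comega X ↔ t = Comega X) :=
    ⟨fun _ => Iff.rfl, Iff.symm, Iff.trans⟩
  exact iconv_le_of_ired_le hequiv (fun _ _ => eq_Comega_iff_of_ired) s t h

theorem CApp_ta_ne_Comega : CApp (ta X) ≠ Comega X := by
  rw [Comega_eq_CApp]
  exact fun h => ta_ne_CApp ((CApp_inj h).trans Comega_eq_CApp)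

theorem not_iconv_CApp_ta_Comega : ¬ iconv ar4 (root4 X) (CApp (ta X)) (Comega X) :=
  fun h => CApp_ta_ne_Comega ((eq_Comega_iff_of_iconv h).2 rfl)

end ConversionClass

section EquationalCounterexample

theorem root4_ta : root4 X (ta X) (fApp (ta X)) := Or.inl ⟨rfl, rfl⟩

theorem root4_tb : root4 X (tb X) (fApp (tb X)) := Or.inr (Or.inl ⟨rfl, rfl⟩)

theorem root4_CApp_tb : root4 X (CApp (tb X)) (CApp (CApp (ta X))) := Or.inr (Or.inr ⟨rfl, rfl⟩)

theorem eqInf_ta_tb : eqInf ar4 (root4 X) (ta X) (tb X) := by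
  let R : Tm ar4 X → Tm ar4 X → Prop := fun s t => s = ta X ∧ t = tb X
  refine le_eqInf_of_le_eqStep_sup (R := R) ?_ _ _ ⟨rfl, rfl⟩
  rintro _ _ ⟨rfl, rfl⟩
  have hcoind : lift ar4 X (R ⊔ eqInf ar4 (root4 X)) (fApp (ta X)) (fApp (tb X)) :=
    lift_fApp (Or.inl ⟨rfl, rfl⟩)
  exact eqStep_trans (eqStep_of_root root4_ta)
    (eqStep_trans (eqStep_of_lift hcoind) (eqStep_of_root_symm root4_tb))

theorem eqInf_CApp_ta_Comega : eqInf ar4 (root4 X) (CApp (ta X)) (Comega X) := by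
  let R : Tm ar4 X → Tm ar4 X → Prop := fun s t => s = CApp (ta X) ∧ t = Comega X
  refine le_eqInf_of_le_eqStep_sup (R := R) ?_ _ _ ⟨rfl, rfl⟩
  rintro _ _ ⟨rfl, rfl⟩
  have hab : lift ar4 X (R ⊔ eqInf ar4 (root4 X)) (CApp (ta X)) (CApp (tb X)) :=
    lift_CApp (Or.inr eqInf_ta_tb)
  have hcoind : lift ar4 X (R ⊔ eqInf ar4 (root4 X)) (CApp (CApp (ta X))) (Comega X) :=
    lift_CApp_Comega (Or.inl ⟨rfl, rfl⟩)
  exact eqStep_trans (eqStep_of_lift hab)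
    (eqStep_trans (eqStep_of_root root4_CApp_tb) (eqStep_of_lift hcoind))

end EquationalCounterexample

/-- `f^ω` and `C^ω` satisfy their defining equations and are the unique such terms;
`a =^∞ b`; `C(a) =^∞ C^ω`; `C(a)` and `C^ω` are not infinitarily convertible;
hence infinitary conversion `((→→→)⁻¹ ∘ →→→)*` is strictly contained in `=^∞`. -/
theorem conversion_strictly_below_eqInf (X : Type) :
    (fomega X = fApp (fomega X) ∧ ∀ u : Tm ar4 X, u = fApp u → u = fomega X) ∧
    (Comega X = CApp (Comega X) ∧ ∀ u : Tm ar4 X, u = CApp u → u = Comega X) ∧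
    eqInf ar4 (root4 X) (ta X) (tb X) ∧
    eqInf ar4 (root4 X) (CApp (ta X)) (Comega X) ∧
    ¬ ReflTransGen (Relation.Comp (flip (ired ar4 (root4 X))) (ired ar4 (root4 X)))
        (CApp (ta X)) (Comega X) ∧
    ReflTransGen (Relation.Comp (flip (ired ar4 (root4 X))) (ired ar4 (root4 X))) <
      eqInf ar4 (root4 X) := by
  have hstrict : ¬ eqInf ar4 (root4 X) ≤ iconv ar4 (root4 X) := fun h =>
    not_iconv_CApp_ta_Comega (h _ _ eqInf_CApp_ta_Comega)
  exact ⟨⟨fomega_eq_fApp, fun _ => eq_fomega_of_eq_fApp⟩,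
    ⟨Comega_eq_CApp, fun _ => eq_Comega_of_eq_CApp⟩,
    eqInf_ta_tb, eqInf_CApp_ta_Comega, not_iconv_CApp_ta_Comega,
    lt_of_le_not_ge iconv_le_eqInf hstrict⟩
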